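/- Assume J ≥ J_0. Then dim_H( ∪_{ℓ_0 ≥ 1} ∩_{ℓ ≥ ℓ_0} T̃_∞((1+b)^ℓ J, b, ε) ∩ I ) = H, where dim_H denotes Hausdorff dimension. -/

import Mathlib

open scoped Classical ENNReal
open Set Filter MeasureTheory ProbabilityTheory

noncomputable section

/-- The dyadic interval `λ_{j,k} = [k 2^{-j}, (k+1) 2^{-j}]`. -/
def dyadic (j k : ℕ) : Set ℝ := Set.Icc ((k : ℝ) / 2 ^ j) (((k : ℝ) + 1) / 2 ^ j)

/-- Indices `k` of dyadic intervals of scale `j` that intersect `I`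
(the collection `I_j`). -/
def dyadicHit (I : Set ℝ) (j : ℕ) : Finset ℕ :=
  (Finset.range (2 ^ j)).filter fun k => (dyadic j k ∩ I).Nonempty

/-- Smallest number of intervals of length `ε` needed to cover `I`. -/
def coverNum (I : Set ℝ) (ε : ℝ) : ℕ :=
  sInf {n : ℕ | ∃ f : Fin n → ℝ, I ⊆ ⋃ i, Set.Icc (f i) (f i + ε)}

/-- Upper box-counting dimension of `I`:
`limsup_{ε → 0⁺} log N(ε) / (- log ε)`. -/
def upperBoxDim (I : Set ℝ) : ℝ :=
  Filter.limsup (fun ε : ℝ => Real.log (coverNum I ε) / (-Real.log ε))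
    (nhdsWithin 0 (Set.Ioi 0))

/-- The scale `⌊(1+β) j⌋` of the children of a dyadic interval of scale `j`. -/
def childScale (β : ℝ) (j : ℕ) : ℕ := ⌊(1 + β) * (j : ℝ)⌋₊

/-- Indices `k'` of dyadic intervals of scale `j'` belonging to `I_{j'}` and contained in
the dyadic interval of index `k` at scale `j`. -/
def childrenIn (I : Set ℝ) (j j' k : ℕ) : Finset ℕ :=
  (dyadicHit I j').filter fun k' => dyadic j' k' ⊆ dyadic j k

/-- The collection `SD(j,β,ε)` of intervals of `I_j` with slow duplication rate. -/
def SD (I : Set ℝ) (H β ε : ℝ) (j : ℕ) : Finset ℕ :=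
  (dyadicHit I j).filter fun k =>
    ((childrenIn I j (childScale β j) k).card : ℝ) ≤
      (2 : ℝ) ^ ((j : ℝ) * (β * H - 4 * (max 1 β) * ε))

/-- The collection `ND(j,β,ε)` of intervals of `I_j` with normal duplication rate. -/
def ND (I : Set ℝ) (H β ε : ℝ) (j : ℕ) : Finset ℕ :=
  (dyadicHit I j).filter fun k =>
    (2 : ℝ) ^ ((j : ℝ) * (β * H - 4 * (max 1 β) * ε)) ≤
        ((childrenIn I j (childScale β j) k).card : ℝ) ∧
    ((childrenIn I j (childScale β j) k).card : ℝ) ≤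
        (2 : ℝ) ^ ((j : ℝ) * (β * H + 4 * (max 1 β) * ε))

/-- The collection `FD(j,β,ε)` of intervals of `I_j` with fast duplication rate. -/
def FD (I : Set ℝ) (H β ε : ℝ) (j : ℕ) : Finset ℕ :=
  (dyadicHit I j).filter fun k =>
    (2 : ℝ) ^ ((j : ℝ) * (β * H + 4 * (max 1 β) * ε)) ≤
      ((childrenIn I j (childScale β j) k).card : ℝ)

/-- `C_β U`: the collection of all children (at scale `⌊(1+β)J⌋`, in `I_{⌊(1+β)J⌋}`)
of the intervals of a collection `U` at scale `J`. -/
def CB (I : Set ℝ) (β : ℝ) (J : ℕ) (U : Finset ℕ) : Finset ℕ :=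
  (dyadicHit I (childScale β J)).filter fun k' =>
    ∃ k ∈ U, dyadic (childScale β J) k' ⊆ dyadic J k

/-- The nested collections `T_ℓ(J,b,ε)`: `Tset I H b ε 0 J` is `T_1(J,b,ε) = ND(J,b,ε)` and
`Tset I H b ε n J` is `T_{n+1}(J,b,ε)`, defined recursively by keeping the intervals having
at least `2^{J(bH-5ε)}` children in `T_n((1+b)J,b,ε)`. -/
def Tset (I : Set ℝ) (H b ε : ℝ) : ℕ → ℕ → Finset ℕ
  | 0, J => ND I H b ε J
  | n + 1, J =>
      (Tset I H b ε n J).filter fun k =>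
        (2 : ℝ) ^ ((J : ℝ) * (b * H - 5 * ε)) ≤
          (((Tset I H b ε n (childScale b J)).filter fun k' =>
              dyadic (childScale b J) k' ⊆ dyadic J k).card : ℝ)

/-- `T_ℓ(J,b,ε)` for `ℓ ≥ 1`. -/
def T (I : Set ℝ) (H b ε : ℝ) (ℓ J : ℕ) : Finset ℕ := Tset I H b ε (ℓ - 1) J

/-- `U_ℓ(J,b,ε) = T_{ℓ-1}(J,b,ε) \ T_ℓ(J,b,ε)` for `ℓ ≥ 2`. -/
def U (I : Set ℝ) (H b ε : ℝ) (ℓ J : ℕ) : Finset ℕ :=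
  T I H b ε (ℓ - 1) J \ T I H b ε ℓ J

/-- `T_∞(J,b,ε) = ∩_{ℓ ≥ 1} T_ℓ(J,b,ε)`. -/
def Tinf (I : Set ℝ) (H b ε : ℝ) (J : ℕ) : Finset ℕ :=
  (Tset I H b ε 0 J).filter fun k => ∀ n, k ∈ Tset I H b ε n J

/-- `U_∞(J,b,ε) = ∪_{ℓ ≥ 2} U_ℓ(J,b,ε)`. -/
def Uinf (I : Set ℝ) (H b ε : ℝ) (J : ℕ) : Finset ℕ :=
  (dyadicHit I J).filter fun k => ∃ ℓ, 2 ≤ ℓ ∧ k ∈ U I H b ε ℓ J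

/-- The union `Ũ` of the dyadic intervals (at scale `j`) of a collection `U`. -/
def tilde (j : ℕ) (U : Finset ℕ) : Set ℝ := ⋃ k ∈ U, dyadic j k

/-- The integer scale `⌊(1+b)^ℓ J⌋`. -/
def rscale (b : ℝ) (J ℓ : ℕ) : ℕ := ⌊(1 + b) ^ ℓ * (J : ℝ)⌋₊

/-!
Each interval of `U_∞(j) = ND(j) \ T_∞(j)` has fewer than `2^{j(bH-5ε)}` children that outlive
it, so altogether these *orphans* number at most `2^{j((1+b)H-4ε)}`, at scale `(1+b)j`. Let
`x ∈ I` lie in an interval outside `T_∞(j)`. If that interval is not in `ND(j)`, then `x` lies in an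
interval of `FD(j)` or in a child of one of `SD(j)`. Otherwise the interval is discarded at some
stage, and either its child containing `x` is an orphan, or this child was discarded at an earlier
stage, and the argument is repeated with it. Hence every point of `I` missing infinitely many of the
sets `T̃_∞((1+b)^ℓ J)` belongs to infinitely many of the sets covered by `FD(j)`, the children of
`SD(j)` and the orphans. All three families have exponential growth rate, relative to their scale,
below `H`, so by the Hausdorff–Cantelli lemma these points form a set of dimension `< H = dim_H I`.
-/

open scoped NNReal Topology

lemma limsup_union {α ι : Type*} (s t : ι → Set α) (f : Filter ι) :
    limsup (fun i ↦ s i ∪ t i) f = limsup s f ∪ limsup t f := by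
  ext x
  simp [mem_limsup_iff_frequently_mem, frequently_or_distrib]

lemma iUnion_ge_iInter_ge_eq_liminf {α : Type*} (s : ℕ → Set α) (m : ℕ) :
    ⋃ n₀ : ℕ, ⋃ (_ : m ≤ n₀), ⋂ n : ℕ, ⋂ (_ : n₀ ≤ n), s n = liminf s atTop := by
  ext x
  simp only [mem_iUnion, mem_iInter, exists_prop, mem_liminf_iff_eventually_mem]
  exact ⟨fun ⟨n₀, _, h⟩ ↦ eventually_atTop.2 ⟨n₀, h⟩,
    fun h ↦ ((eventually_ge_atTop m).and (eventually_forall_ge_atTop.2 h)).exists⟩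

lemma dimH_inter_eq_of_dimH_sdiff_lt {X : Type*} [EMetricSpace X] {s t : Set X}
    (h : dimH (s \ t) < dimH s) : dimH (t ∩ s) = dimH s := by
  have hmax : max (dimH (s ∩ t)) (dimH (s \ t)) = dimH s := by
    rw [← dimH_union, inter_union_sdiff]
  rw [inter_comm]
  exact (max_eq_iff.1 hmax).elim And.left fun hdiff ↦ absurd hdiff.1 h.ne

lemma dimH_limsup_cofinite_le {X ι : Type*} [EMetricSpace X] [Countable ι] {t : ι → Set X}
    {s : ℝ≥0} (hs : 0 < s) (ht : ∑' i, Metric.ediam (t i) ^ (s : ℝ) ≠ ∞) :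
    dimH (limsup t cofinite) ≤ s := by
  borelize X
  have hs' : 0 < (s : ℝ) := hs
  let tail (F : Finset ι) : ℝ≥0∞ := ∑' i : {i // i ∉ F}, Metric.ediam (t i) ^ (s : ℝ)
  have htail : Tendsto tail atTop (𝓝 0) := ENNReal.tendsto_tsum_compl_atTop_zero ht
  have hradius : Tendsto (fun F ↦ tail F ^ (s : ℝ)⁻¹) atTop (𝓝 0) := by
    simpa [hs'] using htail.ennrpow_const (s : ℝ)⁻¹
  have hdiam (F : Finset ι) (i : {i // i ∉ F}) : Metric.ediam (t i) ≤ tail F ^ (s : ℝ)⁻¹ := by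
    rw [ENNReal.le_rpow_inv_iff hs']
    exact ENNReal.le_tsum i
  have hcover (F : Finset ι) : limsup t cofinite ⊆ ⋃ i : {i // i ∉ F}, t i := by
    intro x hx
    rw [mem_limsup_iff_frequently_mem] at hx
    obtain ⟨i, hxi, hi⟩ := (hx.and_eventually F.finite_toSet.eventually_cofinite_notMem).exists
    exact mem_iUnion.2 ⟨⟨i, hi⟩, hxi⟩
  have hmeasure : μH[s] (limsup t cofinite) ≤ 0 := calc
    _ ≤ liminf tail atTop := Measure.hausdorffMeasure_le_liminf_tsum s _ _ hradius
          (fun F (i : {i // i ∉ F}) ↦ t i) (Eventually.of_forall hdiam)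
          (Eventually.of_forall hcover)
    _ = 0 := htail.liminf_eq
  exact dimH_le_of_hausdorffMeasure_ne_top (ne_top_of_le_ne_top ENNReal.zero_ne_top hmeasure)

section Dyadic

variable {I : Set ℝ} {j j' k : ℕ} {x : ℝ}

lemma dyadic_succ_union (j k : ℕ) :
    dyadic (j + 1) (2 * k) ∪ dyadic (j + 1) (2 * k + 1) = dyadic j k := by
  have hmid : ((2 * k : ℕ) + 1 : ℝ) / 2 ^ (j + 1) = (2 * k + 1 : ℕ) / 2 ^ (j + 1) := by
    push_cast; rfl
  have hleft : ((2 * k : ℕ) : ℝ) / 2 ^ (j + 1) = k / 2 ^ j := by push_cast; field_simp; ring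
  have hright : ((2 * k + 1 : ℕ) + 1 : ℝ) / 2 ^ (j + 1) = (k + 1) / 2 ^ j := by
    push_cast; field_simp; ring
  unfold dyadic
  rw [hmid, Icc_union_Icc_eq_Icc (by gcongr; omega) (by gcongr; simp), hleft, hright]

lemma ediam_dyadic (j k : ℕ) : Metric.ediam (dyadic j k) = ENNReal.ofReal (2 ^ (-(j : ℝ))) := by
  rw [dyadic, Real.ediam_Icc, ← sub_div, add_sub_cancel_left, Real.rpow_neg two_pos.le,
    Real.rpow_natCast, one_div]

lemma mem_tilde {F : Finset ℕ} : x ∈ tilde j F ↔ ∃ k ∈ F, x ∈ dyadic j k := by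
  simp [tilde]

lemma exists_mem_childrenIn (hk : k ∈ dyadicHit I j) (hxI : x ∈ I) (hx : x ∈ dyadic j k)
    (hj : j ≤ j') : ∃ k' ∈ childrenIn I j j' k, x ∈ dyadic j' k' := by
  induction j', hj using Nat.le_induction with
  | base => exact ⟨k, Finset.mem_filter.2 ⟨hk, subset_rfl⟩, hx⟩
  | succ i _ ih =>
    obtain ⟨m, hm, hxm⟩ := ih
    simp only [childrenIn, dyadicHit, Finset.mem_filter, Finset.mem_range] at hm
    have hhalves := dyadic_succ_union i m
    obtain ⟨k', hk', hxk', hsub⟩ : ∃ k' < 2 ^ (i + 1), x ∈ dyadic (i + 1) k' ∧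
        dyadic (i + 1) k' ⊆ dyadic i m := by
      rcases hhalves.ge hxm with hx | hx
      · exact ⟨2 * m, by omega, hx, subset_union_left.trans hhalves.le⟩
      · exact ⟨2 * m + 1, by omega, hx, subset_union_right.trans hhalves.le⟩
    refine ⟨k', ?_, hxk'⟩
    simp only [childrenIn, dyadicHit, Finset.mem_filter, Finset.mem_range]
    exact ⟨⟨hk', x, hxk', hxI⟩, hsub.trans hm.2⟩

lemma dyadic_zero_zero : dyadic 0 0 = Icc 0 1 := by
  simp [dyadic]

lemma dyadicHit_zero (hI : I ⊆ Icc 0 1) (hne : I.Nonempty) : dyadicHit I 0 = {0} := by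
  simp [dyadicHit, Finset.filter_singleton, dyadic_zero_zero, inter_eq_right.2 hI, hne]

lemma exists_mem_dyadicHit (hI : I ⊆ Icc 0 1) (hxI : x ∈ I) (j : ℕ) :
    ∃ k ∈ dyadicHit I j, x ∈ dyadic j k := by
  have hroot : 0 ∈ dyadicHit I 0 := by simp [dyadicHit_zero hI ⟨x, hxI⟩]
  obtain ⟨k, hk, hxk⟩ := exists_mem_childrenIn hroot hxI (dyadic_zero_zero ▸ hI hxI) j.zero_le
  exact ⟨k, Finset.filter_subset _ _ hk, hxk⟩

end Dyadic

section DimensionBound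

variable {σ : ℕ → ℕ} {F : ℕ → Finset ℕ}

lemma dimH_limsup_tilde_le_of_summable {s : ℝ≥0} (hs : 0 < s)
    (hsum : Summable fun j ↦ (F j).card * (2 : ℝ) ^ (-(σ j : ℝ) * s)) :
    dimH (limsup (fun j ↦ tilde (σ j) (F j)) atTop) ≤ s := by
  let t (i : Σ j, F j) : Set ℝ := dyadic (σ i.1) i.2
  have ht : ∑' i, Metric.ediam (t i) ^ (s : ℝ) ≠ ∞ := by
    convert hsum.tsum_ofReal_ne_top using 1
    rw [ENNReal.tsum_sigma']
    refine tsum_congr fun j ↦ ?_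
    simp only [t, ediam_dyadic, tsum_fintype, Finset.sum_const, Finset.card_univ,
      Fintype.card_coe, nsmul_eq_mul]
    rw [ENNReal.ofReal_mul (by positivity), ENNReal.ofReal_natCast, Real.rpow_mul two_pos.le,
      ENNReal.ofReal_rpow_of_nonneg (by positivity) s.coe_nonneg]
  refine (dimH_mono fun x hx ↦ ?_).trans (dimH_limsup_cofinite_le hs ht)
  rw [mem_limsup_iff_frequently_mem, frequently_cofinite_iff_infinite]
  rw [mem_limsup_iff_frequently_mem, Nat.frequently_atTop_iff_infinite] at hx
  refine .of_image Sigma.fst (hx.mono fun j hj ↦ ?_)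
  obtain ⟨k, hk, hxk⟩ := mem_tilde.1 hj
  exact ⟨⟨j, k, hk⟩, hxk, rfl⟩

lemma dimH_limsup_tilde_le {a u C : ℝ} (ha : 0 < a) (hσ : ∀ᶠ j : ℕ in atTop, a * j - C ≤ σ j)
    (hF : ∀ᶠ j : ℕ in atTop, ((F j).card : ℝ) ≤ 2 ^ (j * u)) :
    dimH (limsup (fun j ↦ tilde (σ j) (F j)) atTop) ≤ ENNReal.ofReal (u / a) := by
  refine le_of_forall_gt_imp_ge_of_dense fun c hc ↦ ?_
  induction c with
  | top => exact le_top
  | coe s =>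
    replace hc : (u / a).toNNReal < s := ENNReal.coe_lt_coe.1 hc
    have hrate : u - a * s < 0 := by
      have : u / a < s := (Real.le_coe_toNNReal _).trans_lt (NNReal.coe_lt_coe.2 hc)
      rw [div_lt_iff₀' ha] at this
      linarith
    refine dimH_limsup_tilde_le_of_summable (bot_le.trans_lt hc) ?_
    have hgeom : Summable fun j : ℕ ↦ (2 : ℝ) ^ (C * s) * (2 ^ (u - a * s)) ^ j :=
      (summable_geometric_of_lt_one (by positivity)
        (Real.rpow_lt_one_of_one_lt_of_neg one_lt_two hrate)).mul_left _
    refine hgeom.of_norm_bounded_eventually_nat ?_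
    filter_upwards [hσ, hF] with j hσj hFj
    rw [Real.norm_of_nonneg (by positivity)]
    calc (F j).card * (2 : ℝ) ^ (-(σ j : ℝ) * s)
        ≤ 2 ^ (j * u) * 2 ^ (-(a * j - C) * s) := by gcongr; exact one_le_two
      _ = 2 ^ (C * s) * (2 ^ (u - a * s)) ^ j := by
        rw [← Real.rpow_mul_natCast two_pos.le, ← Real.rpow_add two_pos, ← Real.rpow_add two_pos]
        ring_nf

end DimensionBound

section Discarding

variable {I : Set ℝ} {H b ε : ℝ} {j k n : ℕ} {x : ℝ}

lemma le_childScale (hb : 0 ≤ b) (j : ℕ) : j ≤ childScale b j :=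
  Nat.le_floor (le_mul_of_one_le_left j.cast_nonneg (by linarith))

lemma sub_one_le_childScale (b : ℝ) (j : ℕ) : (1 + b) * j - 1 ≤ childScale b j :=
  (Nat.sub_one_lt_floor _).le

lemma mem_tilde_CB {G : Finset ℕ} (hb : 0 ≤ b) (hk : k ∈ G) (hkI : k ∈ dyadicHit I j)
    (hxI : x ∈ I) (hx : x ∈ dyadic j k) : x ∈ tilde (childScale b j) (CB I b j G) := by
  obtain ⟨k', hk', hxk'⟩ := exists_mem_childrenIn hkI hxI hx (le_childScale hb j)
  rw [childrenIn, Finset.mem_filter] at hk'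
  exact mem_tilde.2 ⟨k', Finset.mem_filter.2 ⟨hk'.1, k, hk, hk'.2⟩, hxk'⟩

lemma dyadicHit_subset_union (I : Set ℝ) (H b ε : ℝ) (j : ℕ) :
    dyadicHit I j ⊆ SD I H b ε j ∪ ND I H b ε j ∪ FD I H b ε j := by
  intro k hk
  simp only [SD, ND, FD, Finset.mem_union, Finset.mem_filter, hk, true_and]
  grind

/-- The least `n` with `k ∉ T_{n+2}(j,b,ε)`: an interval of `U_∞(j,b,ε) = ND(j,b,ε) \ T_∞(j,b,ε)`
belongs to `U_{n+2}(j,b,ε)` for this `n`. For `k ∈ T_∞(j,b,ε)` the value is `sInf ∅ = 0`. -/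
def discardStage (I : Set ℝ) (H b ε : ℝ) (j k : ℕ) : ℕ :=
  sInf {n | k ∉ Tset I H b ε (n + 1) j}

lemma discardStage_lt (hk : k ∈ ND I H b ε j) (hn : k ∉ Tset I H b ε n j) :
    discardStage I H b ε j k < n := by
  cases n with
  | zero => exact absurd hk hn
  | succ n => exact Nat.lt_succ_of_le (Nat.sInf_le hn)

lemma mem_Tset_discardStage (hk : k ∈ ND I H b ε j) :
    k ∈ Tset I H b ε (discardStage I H b ε j k) j := by
  by_contra hk'
  exact (discardStage_lt hk hk').false

lemma notMem_Tset_discardStage_succ (hk : k ∈ ND I H b ε j \ Tinf I H b ε j) :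
    k ∉ Tset I H b ε (discardStage I H b ε j k + 1) j := by
  obtain ⟨hkND, hkT⟩ := Finset.mem_sdiff.1 hk
  have : ∃ n, k ∉ Tset I H b ε (n + 1) j := by
    by_contra! hall
    exact hkT (Finset.mem_filter.2 ⟨hkND, fun | 0 => hkND | n + 1 => hall n⟩)
  exact Nat.sInf_mem this

/-- The intervals of scale `⌊(1+b)j⌋` that outlive the interval of `U_∞(j,b,ε)` containing them:
if the latter belongs to `U_{n+2}(j,b,ε)`, these are its children in `T_{n+1}((1+b)j,b,ε)`. -/
def orphans (I : Set ℝ) (H b ε : ℝ) (j : ℕ) : Finset ℕ :=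
  (ND I H b ε j \ Tinf I H b ε j).biUnion fun k ↦
    (Tset I H b ε (discardStage I H b ε j k) (childScale b j)).filter fun k' ↦
      dyadic (childScale b j) k' ⊆ dyadic j k

lemma card_orphans_le (I : Set ℝ) (H b ε : ℝ) (j : ℕ) :
    ((orphans I H b ε j).card : ℝ) ≤ (ND I H b ε j).card * 2 ^ (j * (b * H - 5 * ε)) := by
  let children (k : ℕ) : Finset ℕ :=
    (Tset I H b ε (discardStage I H b ε j k) (childScale b j)).filter fun k' ↦
      dyadic (childScale b j) k' ⊆ dyadic j k
  have hfew (k : ℕ) (hk : k ∈ ND I H b ε j \ Tinf I H b ε j) :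
      ((children k).card : ℝ) ≤ 2 ^ (j * (b * H - 5 * ε)) := by
    by_contra! hmany
    have hkND := Finset.sdiff_subset hk
    exact notMem_Tset_discardStage_succ hk
      (Finset.mem_filter.2 ⟨mem_Tset_discardStage hkND, hmany.le⟩)
  calc ((orphans I H b ε j).card : ℝ)
      ≤ ∑ k ∈ ND I H b ε j \ Tinf I H b ε j, ((children k).card : ℝ) := by
        exact_mod_cast Finset.card_biUnion_le
    _ ≤ (ND I H b ε j \ Tinf I H b ε j).card * 2 ^ (j * (b * H - 5 * ε)) := by
        simpa using Finset.sum_le_card_nsmul _ _ _ hfew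
    _ ≤ (ND I H b ε j).card * 2 ^ (j * (b * H - 5 * ε)) := by
        gcongr; exact Finset.sdiff_subset

/-- The points at which the construction of `T_∞` may fail at scale `j`: those in an interval of
`FD`, in a child of an interval of `SD`, or in an orphan. -/
def exceptionalSet (I : Set ℝ) (H b ε : ℝ) (j : ℕ) : Set ℝ :=
  tilde j (FD I H b ε j) ∪ tilde (childScale b j) (CB I b j (SD I H b ε j)) ∪
    tilde (childScale b j) (orphans I H b ε j)

lemma mem_exceptionalSet_of_notMem_ND (hb : 0 ≤ b) (hk : k ∈ dyadicHit I j) (hxI : x ∈ I)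
    (hx : x ∈ dyadic j k) (hkND : k ∉ ND I H b ε j) : x ∈ exceptionalSet I H b ε j := by
  have hcases := dyadicHit_subset_union I H b ε j hk
  simp only [Finset.mem_union, hkND, or_false] at hcases
  rcases hcases with hSD | hFD
  · exact .inl (.inr (mem_tilde_CB hb hSD hk hxI hx))
  · exact .inl (.inl (mem_tilde.2 ⟨k, hFD, hx⟩))

lemma exists_ge_mem_exceptionalSet_of_notMem_Tset (hb : 0 ≤ b) (hk : k ∈ dyadicHit I j)
    (hxI : x ∈ I) (hx : x ∈ dyadic j k) (hn : k ∉ Tset I H b ε n j) :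
    ∃ i ≥ j, x ∈ exceptionalSet I H b ε i := by
  induction n using Nat.strong_induction_on generalizing j k with
  | _ n ih =>
    by_cases hkND : k ∈ ND I H b ε j
    swap
    · exact ⟨j, le_rfl, mem_exceptionalSet_of_notMem_ND hb hk hxI hx hkND⟩
    let m := discardStage I H b ε j k
    have hjj' := le_childScale hb j
    obtain ⟨k', hk', hxk'⟩ := exists_mem_childrenIn hk hxI hx hjj'
    rw [childrenIn, Finset.mem_filter] at hk'
    by_cases hk'm : k' ∈ Tset I H b ε m (childScale b j)
    · have hkU : k ∈ ND I H b ε j \ Tinf I H b ε j :=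
        Finset.mem_sdiff.2 ⟨hkND, fun hkT ↦ hn ((Finset.mem_filter.1 hkT).2 n)⟩
      have hk'orphan : k' ∈ orphans I H b ε j :=
        Finset.mem_biUnion.2 ⟨k, hkU, Finset.mem_filter.2 ⟨hk'm, hk'.2⟩⟩
      exact ⟨j, le_rfl, .inr (mem_tilde.2 ⟨k', hk'orphan, hxk'⟩)⟩
    · -- the new interval is already missing at the earlier stage `m < n`
      obtain ⟨i, hi, hxi⟩ := ih m (discardStage_lt hkND hn) hk'.1 hxk' hk'm
      exact ⟨i, hjj'.trans hi, hxi⟩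

lemma exists_ge_mem_exceptionalSet_of_notMem_tilde_Tinf (hI : I ⊆ Icc 0 1) (hb : 0 ≤ b)
    (hxI : x ∈ I) (hx : x ∉ tilde j (Tinf I H b ε j)) :
    ∃ i ≥ j, x ∈ exceptionalSet I H b ε i := by
  obtain ⟨k, hk, hxk⟩ := exists_mem_dyadicHit hI hxI j
  have hkT : ∃ n, k ∉ Tset I H b ε n j := by
    by_contra! hall
    exact hx (mem_tilde.2 ⟨k, Finset.mem_filter.2 ⟨hall 0, hall⟩, hxk⟩)
  obtain ⟨n, hn⟩ := hkT
  exact exists_ge_mem_exceptionalSet_of_notMem_Tset hb hk hxI hxk hn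

lemma dimH_limsup_exceptionalSet_lt (hH : 0 < H) (hb : 0 ≤ b) (hε : 0 < ε)
    (hND : ∀ᶠ j : ℕ in atTop, ((ND I H b ε j).card : ℝ) ≤ 2 ^ (j * (H + ε)))
    (hFD : ∀ᶠ j : ℕ in atTop, ((FD I H b ε j).card : ℝ) ≤ 2 ^ (j * (H - 2 * ε)))
    (hSD : ∀ᶠ j : ℕ in atTop,
      ((CB I b j (SD I H b ε j)).card : ℝ) ≤ 2 ^ (j * (1 + b) * (H - 3 * ε))) :
    dimH (limsup (exceptionalSet I H b ε) atTop) < ENNReal.ofReal H := by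
  have hb' : 0 < 1 + b := by linarith
  have hchild : ∀ᶠ j : ℕ in atTop, (1 + b) * j - 1 ≤ (childScale b j : ℝ) :=
    .of_forall (sub_one_le_childScale b)
  have horphans : ∀ᶠ j : ℕ in atTop,
      ((orphans I H b ε j).card : ℝ) ≤ 2 ^ (j * ((1 + b) * H - 4 * ε)) := by
    filter_upwards [hND] with j hj
    calc ((orphans I H b ε j).card : ℝ)
        ≤ (ND I H b ε j).card * 2 ^ (j * (b * H - 5 * ε)) := card_orphans_le I H b ε j
      _ ≤ 2 ^ (j * (H + ε)) * 2 ^ (j * (b * H - 5 * ε)) := by gcongr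
      _ = 2 ^ (j * ((1 + b) * H - 4 * ε)) := by rw [← Real.rpow_add two_pos]; ring_nf
  simp only [mul_assoc] at hSD
  have hdimFD := dimH_limsup_tilde_le (σ := id) (a := 1) (C := 0) one_pos (by simp) hFD
  have hdimSD := dimH_limsup_tilde_le hb' hchild hSD
  have hdimOrphans := dimH_limsup_tilde_le hb' hchild horphans
  unfold exceptionalSet
  simp only [limsup_union, dimH_union, max_lt_iff]
  refine ⟨⟨hdimFD.trans_lt ?_, hdimSD.trans_lt ?_⟩, hdimOrphans.trans_lt ?_⟩ <;>
    rw [ENNReal.ofReal_lt_ofReal_iff hH, div_lt_iff₀ (by positivity)] <;> nlinarith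

end Discarding

section Scales

variable {I : Set ℝ} {b : ℝ}

lemma tendsto_rscale_atTop (hb : 0 < b) {J : ℕ} (hJ : J ≠ 0) : Tendsto (rscale b J) atTop atTop :=
  tendsto_nat_floor_atTop.comp <|
    (tendsto_pow_atTop_atTop_of_one_lt (by linarith)).atTop_mul_const (by positivity)

lemma Tset_scale_zero (hI : I ⊆ Icc 0 1) (hne : I.Nonempty) (H b ε : ℝ) (n : ℕ) :
    Tset I H b ε n 0 = {0} := by
  induction n with
  | zero => simp [Tset, ND, childrenIn, childScale, dyadicHit_zero hI hne, Finset.filter_singleton]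
  | succ n ih => simp [Tset, ih, childScale, Finset.filter_singleton]

lemma tilde_Tinf_scale_zero (hI : I ⊆ Icc 0 1) (hne : I.Nonempty) (H b ε : ℝ) :
    tilde 0 (Tinf I H b ε 0) = Icc 0 1 := by
  simp [tilde, Tinf, Tset_scale_zero hI hne, dyadic_zero_zero, Finset.filter_singleton]

lemma sdiff_liminf_tilde_Tinf_subset (hI : I ⊆ Icc 0 1) (hb : 0 < b) (H ε : ℝ) (J : ℕ) :
    I \ liminf (fun ℓ ↦ tilde (rscale b J ℓ) (Tinf I H b ε (rscale b J ℓ))) atTop ⊆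
      limsup (exceptionalSet I H b ε) atTop := by
  rintro x ⟨hxI, hx⟩
  rw [mem_liminf_iff_eventually_mem, not_eventually] at hx
  rw [mem_limsup_iff_frequently_mem, frequently_atTop]
  intro N
  rcases eq_or_ne J 0 with rfl | hJ
  · obtain ⟨ℓ, hℓ⟩ := hx.exists
    rw [rscale, Nat.cast_zero, mul_zero, Nat.floor_zero, tilde_Tinf_scale_zero hI ⟨x, hxI⟩] at hℓ
    exact absurd (hI hxI) hℓ
  · obtain ⟨ℓ, hxℓ, hNℓ⟩ :=
      (hx.and_eventually ((tendsto_rscale_atTop hb hJ).eventually_ge_atTop N)).exists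
    obtain ⟨i, hi, hxi⟩ := exists_ge_mem_exceptionalSet_of_notMem_tilde_Tinf hI hb.le hxI hxℓ
    exact ⟨i, hNℓ.trans hi, hxi⟩

end Scales

theorem dimH_union_inter_Tinf_general {I : Set ℝ} {H b ε : ℝ} (hI : I ⊆ Icc 0 1) (hH : 0 < H)
    (hdim : dimH I = ENNReal.ofReal H) (hb : 0 < b) (hε : 0 < ε)
    (hND : ∀ᶠ j : ℕ in atTop, ((ND I H b ε j).card : ℝ) ≤ 2 ^ (j * (H + ε)))
    (hFD : ∀ᶠ j : ℕ in atTop, ((FD I H b ε j).card : ℝ) ≤ 2 ^ (j * (H - 2 * ε)))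
    (hSD : ∀ᶠ j : ℕ in atTop,
      ((CB I b j (SD I H b ε j)).card : ℝ) ≤ 2 ^ (j * (1 + b) * (H - 3 * ε)))
    (J : ℕ) :
    dimH ((⋃ ℓ₀ : ℕ, ⋃ (_ : 1 ≤ ℓ₀), ⋂ ℓ : ℕ, ⋂ (_ : ℓ₀ ≤ ℓ),
        tilde (rscale b J ℓ) (Tinf I H b ε (rscale b J ℓ))) ∩ I) =
      ENNReal.ofReal H := by
  rw [iUnion_ge_iInter_ge_eq_liminf, ← hdim]
  apply dimH_inter_eq_of_dimH_sdiff_lt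
  calc dimH (I \ liminf (fun ℓ ↦ tilde (rscale b J ℓ) (Tinf I H b ε (rscale b J ℓ))) atTop)
      ≤ dimH (limsup (exceptionalSet I H b ε) atTop) :=
        dimH_mono (sdiff_liminf_tilde_Tinf_subset hI hb H ε J)
    _ < ENNReal.ofReal H := dimH_limsup_exceptionalSet_lt hH hb.le hε hND hFD hSD
    _ = dimH I := hdim.symm

/-- the union over `ℓ₀ ≥ 1` of the intersections over `ℓ ≥ ℓ₀` of the unions
of the intervals of `T_∞((1+b)^ℓ J,b,ε)`, intersected with `I`, has Hausdorff dimension `H`. -/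
theorem dimH_union_inter_Tinf
    (I : Set ℝ) (H : ℝ) (hIc : IsCompact I) (hIsub : I ⊆ Set.Icc 0 1) (hIne : I.Nonempty)
    (hHpos : 0 < H) (hdim : dimH I = ENNReal.ofReal H) (hbox : upperBoxDim I = H)
    (b ε : ℝ) (hb : b ∈ Set.Ioo (0 : ℝ) 1) (hε : 0 < ε) (hbH : 0 < b * H - 5 * ε)
    (J₀ : ℕ)
    (hJ₀ : ∀ j ≥ J₀,
      ((2 : ℝ) ^ ((j : ℝ) * (H - 2 * ε)) ≤ ((ND I H b ε j).card : ℝ) ∧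
        ((ND I H b ε j).card : ℝ) ≤ (2 : ℝ) ^ ((j : ℝ) * (H + ε))) ∧
      ((FD I H b ε j).card : ℝ) ≤ (2 : ℝ) ^ ((j : ℝ) * (H - 2 * ε)) ∧
      ((CB I b j (SD I H b ε j)).card : ℝ) ≤ (2 : ℝ) ^ ((j : ℝ) * (1 + b) * (H - 3 * ε)))
    (J : ℕ) (hJ : J₀ ≤ J) :
    dimH ((⋃ ℓ₀ : ℕ, ⋃ (_ : 1 ≤ ℓ₀), ⋂ ℓ : ℕ, ⋂ (_ : ℓ₀ ≤ ℓ),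
        tilde (rscale b J ℓ) (Tinf I H b ε (rscale b J ℓ))) ∩ I) =
      ENNReal.ofReal H := by
  have hbounds := eventually_atTop.2 ⟨J₀, hJ₀⟩
  exact dimH_union_inter_Tinf_general hIsub hHpos hdim hb.1 hε (hbounds.mono fun _ h ↦ h.1.2)
    (hbounds.mono fun _ h ↦ h.2.1) (hbounds.mono fun _ h ↦ h.2.2) J
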